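/- arXiv:2511.10000 — 2 statements merged into one kernel-verified Lean document; each statement's English description precedes it below -/
import Mathlib

section
/- For every multi-level apportionment instance whose tree is a full binary tree (every node has exactly 0 or 2 children) and every non-negative integer h, there exists an allocation of h seats that fulfills both upper quota and lower quota. -/
/-- A multi-level apportionment instance: a rooted tree on nodes `0, …, n`
(root `0`, encoded by a parent function with `parent i < i` for `i ≠ 0`),
together with entitlements `W`. -/
structure MLA where
  n : ℕ
  parent : Fin (n + 1) → Fin (n + 1)
  parent_lt : ∀ i : Fin (n + 1), i ≠ 0 → (parent i : ℕ) < (i : ℕ)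
  W : Fin (n + 1) → ℝ
  W_pos : ∀ i, 0 < W i
  W_le_one : ∀ i, W i ≤ 1
  W_root : W 0 = 1
  W_sum : ∀ i : Fin (n + 1),
    (Finset.univ.filter (fun c => c ≠ 0 ∧ parent c = i)).Nonempty →
    ∑ c ∈ Finset.univ.filter (fun c => c ≠ 0 ∧ parent c = i), W c = 1

namespace MLA

variable (T : MLA)

/-- The set of children of node `i`. -/
def children (i : Fin (T.n + 1)) : Finset (Fin (T.n + 1)) :=
  Finset.univ.filter (fun c => c ≠ 0 ∧ T.parent c = i)

/-- The ancestor set `A(i)`: `A(0) = {0}` and `A(i) = {parent i} ∪ A(parent i)`. -/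
def ancestors (i : Fin (T.n + 1)) : Finset (Fin (T.n + 1)) :=
  if h : i = 0 then {0} else insert (T.parent i) (ancestors (T.parent i))
termination_by (i : ℕ)
decreasing_by exact T.parent_lt i h

/-- The entitlement of node `i` relative to the root: `R i = ∏_{a ∈ A(i) ∪ {i}} W a`. -/
def R (i : Fin (T.n + 1)) : ℝ := ∏ a ∈ insert i (T.ancestors i), T.W a

/-- `V` is an allocation of `h` seats. -/
def IsAlloc (h : ℕ) (V : Fin (T.n + 1) → ℕ) : Prop :=
  V 0 = h ∧ ∀ i, (T.children i).Nonempty → V i = ∑ c ∈ T.children i, V c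

/-- `V` fulfills lower quota: `V i ≥ LQ i = max_{a ∈ A(i)} ⌊(R i / R a) · V a⌋`. -/
def FulfillsLowerQuota (V : Fin (T.n + 1) → ℕ) : Prop :=
  ∀ i, ∀ a ∈ T.ancestors i, ⌊T.R i / T.R a * (V a : ℝ)⌋ ≤ (V i : ℤ)

/-- `V` fulfills upper quota: `V i ≤ UQ i = min_{a ∈ A(i)} ⌈(R i / R a) · V a⌉`. -/
def FulfillsUpperQuota (V : Fin (T.n + 1) → ℕ) : Prop :=
  ∀ i, ∀ a ∈ T.ancestors i, (V i : ℤ) ≤ ⌈T.R i / T.R a * (V a : ℝ)⌉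


/-- `P` is the set of nodes receiving the new seat in one step of an iterative
method with selection criterion `crit` (to be minimized among children) and
eligibility constraint `elig`: `P` is a root-to-leaf path, each non-root node on
the path is an eligible child of its parent minimizing `crit` among all eligible
children, and the seat counts along `P` each increase by one. -/
def IsStepWith (crit : (Fin (T.n + 1) → ℕ) → Fin (T.n + 1) → ℝ)
    (elig : (Fin (T.n + 1) → ℕ) → Fin (T.n + 1) → Prop)
    (P : Finset (Fin (T.n + 1))) (Vh Vh1 : Fin (T.n + 1) → ℕ) : Prop :=
  (0 : Fin (T.n + 1)) ∈ P ∧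
  (∀ i ∈ P, i ≠ 0 → T.parent i ∈ P) ∧
  (∀ i ∈ P, (T.children i).Nonempty → ∃ c ∈ T.children i, c ∈ P) ∧
  (∀ c ∈ P, ∀ d ∈ P, c ≠ 0 → d ≠ 0 → T.parent c = T.parent d → c = d) ∧
  (∀ c ∈ P, c ≠ 0 → elig Vh c ∧
    ∀ d ∈ T.children (T.parent c), elig Vh d → crit Vh c ≤ crit Vh d) ∧
  (∀ i, Vh1 i = Vh i + if i ∈ P then 1 else 0)

/-- `V : ℕ → (nodes → ℕ)` is a run of the iterative method given by `crit` and
`elig` (with arbitrary tie-breaking): `V 0` is the all-zero allocation and each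
`V (h+1)` is obtained from `V h` by allocating one more seat along a path. -/
def IsRun (crit : (Fin (T.n + 1) → ℕ) → Fin (T.n + 1) → ℝ)
    (elig : (Fin (T.n + 1) → ℕ) → Fin (T.n + 1) → Prop)
    (V : ℕ → Fin (T.n + 1) → ℕ) : Prop :=
  (∀ i, V 0 i = 0) ∧ ∀ h, ∃ P, T.IsStepWith crit elig P (V h) (V (h + 1))

/-- Adams' criterion: a child `c` minimizing `V c / R c` receives the seat. -/
noncomputable def adamsCrit (V : Fin (T.n + 1) → ℕ) (c : Fin (T.n + 1)) : ℝ :=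
  (V c : ℝ) / T.R c

/-- Jefferson's criterion: a child `c` minimizing `(V c + 1) / R c` receives the seat. -/
noncomputable def jeffersonCrit (V : Fin (T.n + 1) → ℕ) (c : Fin (T.n + 1)) : ℝ :=
  ((V c : ℝ) + 1) / T.R c

/-- Trivial eligibility constraint: every child is eligible. -/
def trivElig (_ : Fin (T.n + 1) → ℕ) (_ : Fin (T.n + 1)) : Prop := True

/-- Eligibility constraint of the quota method: `V c / W c < V (parent c) + 1`. -/
def quotaElig (V : Fin (T.n + 1) → ℕ) (c : Fin (T.n + 1)) : Prop :=
  (V c : ℝ) / T.W c < (V (T.parent c) : ℝ) + 1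

/-- Eligibility constraint of the upper-compliant quota method:
`V c / R c < (V a + 1) / R a` for every ancestor `a` of `c`. -/
def ucElig (V : Fin (T.n + 1) → ℕ) (c : Fin (T.n + 1)) : Prop :=
  ∀ a ∈ T.ancestors c, (V c : ℝ) / T.R c < ((V a : ℝ) + 1) / T.R a

end MLA

/-- The tree of `T` is a full binary tree: every node has 0 or 2 children. -/
def MLA.FullBinary (T : MLA) : Prop :=
  ∀ i, (T.children i).card = 0 ∨ (T.children i).card = 2

theorem split_aux {ι : Type*} (S : Finset ι) (x : ι → ℝ) (V : ℕ) (w : ℝ) (hw0 : 0 < w)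
    (hw1 : 0 < 1 - w) (i : ι) (hi : i ∈ S) (hxi : x i = V)
    (hp : ∀ a ∈ S, ∀ b ∈ S, |x a - x b| < 1) :
    ∃ k l : ℕ, k + l = V ∧ ∀ a ∈ S, |(k : ℝ) - w * x a| < 1 ∧ |(l : ℝ) - (1 - w) * x a| < 1 := by
  obtain ⟨b, hb, hmax⟩ := S.exists_max_image
    (fun a => max (w * x a) (V - (1 - w) * x a)) ⟨i, hi⟩
  set M := max (w * x b) (V - (1 - w) * x b) with hM
  have key : ∀ a ∈ S, (w * x a ≤ M ∧ M < w * x a + 1) ∧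
      (V - (1 - w) * x a ≤ M ∧ M < V - (1 - w) * x a + 1) := by
    intro a ha
    have h1 := hmax a ha
    have h2 := abs_lt.1 (hp a ha b hb)
    have h3 := abs_lt.1 (hp a ha i hi)
    have h4 := abs_lt.1 (hp b hb i hi)
    rw [hxi] at h3 h4
    refine ⟨⟨(le_max_left _ _).trans h1, ?_⟩, (le_max_right _ _).trans h1, ?_⟩
    · rw [hM]; apply max_lt <;> nlinarith
    · rw [hM]; apply max_lt <;> nlinarith
  have hf1 := Int.floor_le M
  have hf2 := Int.lt_floor_add_one M
  have hV : (0 : ℝ) ≤ V := Nat.cast_nonneg _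
  obtain ⟨⟨hi1, hi2⟩, hi3, hi4⟩ := key i hi
  rw [hxi] at hi1 hi2 hi3 hi4
  have hk0 : 0 ≤ ⌊M⌋ := Int.floor_nonneg.2 (by nlinarith)
  have hkV : ⌊M⌋ < (V : ℤ) + 1 := by
    have : ((⌊M⌋ : ℤ) : ℝ) < ((V : ℤ) + 1 : ℤ) := by push_cast; nlinarith
    exact_mod_cast this
  obtain ⟨k, hk⟩ := Int.eq_ofNat_of_zero_le hk0
  rw [hk] at hf1 hf2 hkV
  obtain ⟨l, hl⟩ : ∃ l, V = k + l := Nat.exists_eq_add_of_le (by omega)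
  refine ⟨k, l, hl.symm, fun a ha => ?_⟩
  obtain ⟨⟨h1, h2⟩, h3, h4⟩ := key a ha
  have hl' : (V : ℝ) = k + l := by exact_mod_cast hl
  push_cast at hf1 hf2
  rw [abs_lt, abs_lt]
  refine ⟨⟨?_, ?_⟩, ?_, ?_⟩ <;> linarith

namespace MLA

theorem anc_zero (T : MLA) : T.ancestors 0 = {0} := by
  rw [ancestors]; simp

theorem anc_ne (T : MLA) {i : Fin (T.n + 1)} (h : i ≠ 0) :
    T.ancestors i = insert (T.parent i) (T.ancestors (T.parent i)) := by
  conv_lhs => rw [ancestors]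
  simp [h]

theorem node_ind (T : MLA) (P : Fin (T.n + 1) → Prop) (h0 : P 0)
    (hs : ∀ i, i ≠ 0 → P (T.parent i) → P i) (i : Fin (T.n + 1)) : P i := by
  induction hn : (i : ℕ) using Nat.strong_induction_on generalizing i with
  | _ m ih =>
    by_cases h : i = 0
    · exact h ▸ h0
    · exact hs i h (ih _ (hn ▸ T.parent_lt i h) _ rfl)

theorem anc_le (T : MLA) (i : Fin (T.n + 1)) : ∀ a ∈ T.ancestors i, (a : ℕ) ≤ i := by
  refine T.node_ind (fun i => ∀ a ∈ T.ancestors i, (a : ℕ) ≤ i) ?_ ?_ i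
  · intro a ha; rw [anc_zero] at ha; simp at ha; simp [ha]
  · intro i hi ih a ha
    have := T.parent_lt i hi
    rw [anc_ne T hi, Finset.mem_insert] at ha
    rcases ha with rfl | ha
    · omega
    · have := ih a ha; omega

theorem anc_total (T : MLA) (i : Fin (T.n + 1)) : ∀ a ∈ insert i (T.ancestors i),
    ∀ b ∈ insert i (T.ancestors i), a = b ∨ a ∈ T.ancestors b ∨ b ∈ T.ancestors a := by
  refine T.node_ind (fun i => ∀ a ∈ insert i (T.ancestors i),
    ∀ b ∈ insert i (T.ancestors i), a = b ∨ a ∈ T.ancestors b ∨ b ∈ T.ancestors a) ?_ ?_ i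
  · intro a ha b hb; rw [anc_zero] at ha hb; simp at ha hb; simp [ha, hb]
  · intro i hi ih a ha b hb
    rw [Finset.mem_insert] at ha hb
    rcases ha with rfl | ha
    · rcases hb with rfl | hb
      · exact Or.inl rfl
      · exact Or.inr (Or.inr hb)
    · rcases hb with rfl | hb
      · exact Or.inr (Or.inl ha)
      · rw [anc_ne T hi] at ha hb
        exact ih a ha b hb

theorem R_pos (T : MLA) (i : Fin (T.n + 1)) : 0 < T.R i :=
  Finset.prod_pos fun a _ => T.W_pos a

theorem R_child (T : MLA) {i : Fin (T.n + 1)} (h : i ≠ 0) :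
    T.R i = T.W i * T.R (T.parent i) := by
  unfold R
  rw [Finset.prod_insert, anc_ne T h]
  intro hm
  have h1 := T.parent_lt i h
  rw [anc_ne T h, Finset.mem_insert] at hm
  rcases hm with hm | hm
  · rw [← hm] at h1; omega
  · have := T.anc_le _ _ hm; omega

theorem R_anti (T : MLA) (i : Fin (T.n + 1)) : ∀ a ∈ insert i (T.ancestors i), T.R i ≤ T.R a := by
  refine T.node_ind (fun i => ∀ a ∈ insert i (T.ancestors i), T.R i ≤ T.R a) ?_ ?_ i
  · intro a ha; rw [anc_zero] at ha; simp at ha; simp [ha]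
  · intro i hi ih a ha
    rw [Finset.mem_insert] at ha
    rcases ha with rfl | ha
    · exact le_rfl
    · rw [anc_ne T hi] at ha
      refine le_trans ?_ (ih a ha)
      rw [R_child T hi]
      have := T.R_pos (T.parent i)
      have := T.W_le_one i
      nlinarith

/-- Partial solution: everything is fine for the children of nodes below `m`. -/
def Good (T : MLA) (h m : ℕ) (V : Fin (T.n + 1) → ℕ) : Prop :=
  V 0 = h ∧ (∀ i : Fin (T.n + 1), (i : ℕ) < m → (T.children i).Nonempty →
    V i = ∑ c ∈ T.children i, V c) ∧
  ∀ j, j ≠ 0 → (T.parent j : ℕ) < m → ∀ a ∈ T.ancestors j,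
    |(V j : ℝ) - T.R j / T.R a * V a| < 1

theorem good_quota (T : MLA) {h m : ℕ} {V : Fin (T.n + 1) → ℕ} (hV : T.Good h m V)
    (b : Fin (T.n + 1)) (hb : (b : ℕ) ≤ m) : ∀ a ∈ T.ancestors b,
    |(V b : ℝ) - T.R b / T.R a * V a| < 1 := by
  by_cases h0 : b = 0
  · subst h0
    intro a ha; rw [anc_zero] at ha; simp at ha; subst ha
    rw [div_self (T.R_pos 0).ne']; simp
  · exact hV.2.2 b h0 (lt_of_lt_of_le (T.parent_lt b h0) hb)

theorem good_pair (T : MLA) {h m : ℕ} {V : Fin (T.n + 1) → ℕ} (hV : T.Good h m V)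
    (i : Fin (T.n + 1)) (hi : (i : ℕ) = m) (a b : Fin (T.n + 1))
    (hb : b ∈ insert i (T.ancestors i))
    (hab : a ∈ T.ancestors b) : |T.R i / T.R a * V a - T.R i / T.R b * V b| < 1 := by
  have hbm : (b : ℕ) ≤ m := by
    rw [Finset.mem_insert] at hb
    rcases hb with rfl | hb
    · omega
    · exact hi ▸ T.anc_le _ _ hb
  have h1 := T.good_quota hV b hbm a hab
  have h2 := T.R_anti i b hb
  have hRb := T.R_pos b
  have hRa := T.R_pos a
  have hRi := T.R_pos i
  have e : T.R i / T.R a * V a - T.R i / T.R b * V b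
      = - (T.R i / T.R b * ((V b : ℝ) - T.R b / T.R a * V a)) := by
    field_simp; ring
  rw [e, abs_neg, abs_mul, abs_of_pos (div_pos hRi hRb)]
  have h3 : T.R i / T.R b ≤ 1 := (div_le_one hRb).2 h2
  have h4 : 0 < T.R i / T.R b := div_pos hRi hRb
  nlinarith [abs_nonneg ((V b : ℝ) - T.R b / T.R a * V a)]

theorem mem_children (T : MLA) {i c : Fin (T.n + 1)} :
    c ∈ T.children i ↔ c ≠ 0 ∧ T.parent c = i := by simp [children]

theorem good_step (T : MLA) (hbin : T.FullBinary) {h m : ℕ} {V : Fin (T.n + 1) → ℕ}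
    (hm : m < T.n + 1) (hV : T.Good h m V) : ∃ V', T.Good h (m + 1) V' := by
  obtain ⟨i, hi⟩ : ∃ i : Fin (T.n + 1), (i : ℕ) = m := ⟨⟨m, hm⟩, rfl⟩
  rcases hbin i with h0 | h2
  · rw [Finset.card_eq_zero] at h0
    refine ⟨V, hV.1, fun j hj hne => ?_, fun j hj hjm => ?_⟩
    · by_cases hji : j = i
      · subst hji; simp [h0] at hne
      · exact hV.2.1 j (by have : (j : ℕ) ≠ i := fun hh => hji (Fin.ext hh)
                           omega) hne
    · refine hV.2.2 j hj ?_
      have : (T.parent j : ℕ) ≠ i := fun hh => by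
        have : j ∈ T.children i := T.mem_children.2 ⟨hj, Fin.ext hh⟩
        simp [h0] at this
      omega
  · obtain ⟨c, d, hcd, hch⟩ := Finset.card_eq_two.1 h2
    have hc : c ≠ 0 ∧ T.parent c = i := T.mem_children.1 (by simp [hch])
    have hd : d ≠ 0 ∧ T.parent d = i := T.mem_children.1 (by simp [hch])
    have hci := T.parent_lt c hc.1
    have hdi := T.parent_lt d hd.1
    rw [hc.2] at hci
    rw [hd.2] at hdi
    have hW : T.W c + T.W d = 1 := by
      have := T.W_sum i (by change (T.children i).Nonempty; simp [hch])
      change ∑ c ∈ T.children i, T.W c = 1 at this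
      rwa [hch, Finset.sum_pair hcd] at this
    have hWd : T.W d = 1 - T.W c := by linarith
    obtain ⟨k, l, hkl, hq⟩ := split_aux (insert i (T.ancestors i))
      (fun a => T.R i / T.R a * V a) (V i) (T.W c) (T.W_pos c) (hWd ▸ T.W_pos d) i
      (by simp) (by simp [div_self (T.R_pos i).ne']) (by
        intro a ha b hb
        rcases T.anc_total i a ha b hb with rfl | hab | hab
        · simp
        · exact T.good_pair hV i hi a b hb hab
        · rw [abs_sub_comm]; exact T.good_pair hV i hi b a ha hab)
    let V' : Fin (T.n + 1) → ℕ := fun j => if j = c then k else if j = d then l else V j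
    have hV'c : V' c = k := by simp [V']
    have hV'd : V' d = l := by simp [V', hcd.symm]
    have hV'o : ∀ j, j ≠ c → j ≠ d → V' j = V j := fun j h1 h2 => by simp [V', h1, h2]
    have hle : ∀ j : Fin (T.n + 1), (j : ℕ) ≤ m → V' j = V j := fun j hj =>
      hV'o j (by rintro rfl; omega) (by rintro rfl; omega)
    refine ⟨V', ?_, ?_, ?_⟩
    · rw [hV'o 0 hc.1.symm hd.1.symm]; exact hV.1
    · intro j hj hne
      rw [hle j (by omega)]
      by_cases hji : j = i
      · subst hji
        rw [hch, Finset.sum_pair hcd, hV'c, hV'd, hkl]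
      · have : (j : ℕ) ≠ i := fun hh => hji (Fin.ext hh)
        rw [hV.2.1 j (by omega) hne]
        refine Finset.sum_congr rfl fun e he => ?_
        have he' := (T.mem_children.1 he).2
        refine (hV'o e ?_ ?_).symm
        · rintro rfl; exact hji (he'.symm.trans hc.2)
        · rintro rfl; exact hji (he'.symm.trans hd.2)
    · intro j hj hjm a ha
      have haj : V' a = V a := by
        apply hle
        rw [anc_ne T hj, Finset.mem_insert] at ha
        rcases ha with rfl | ha
        · omega
        · have := T.anc_le _ _ ha; omega
      rw [haj]
      by_cases hji : T.parent j = i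
      · have hRj := T.R_child hj
        rw [anc_ne T hj, hji] at ha
        have hja : j ∈ T.children i := T.mem_children.2 ⟨hj, hji⟩
        rw [hji] at hRj
        have hqa := hq a ha
        rw [hRj, mul_div_assoc, mul_assoc]
        rw [hch, Finset.mem_insert, Finset.mem_singleton] at hja
        rcases hja with rfl | rfl
        · rw [hV'c]; exact hqa.1
        · rw [hV'd, hWd]; exact hqa.2
      · have : (T.parent j : ℕ) ≠ i := fun hh => hji (Fin.ext hh)
        rw [hV'o j (by rintro rfl; exact hji hc.2) (by rintro rfl; exact hji hd.2)]
        exact hV.2.2 j hj (by omega) a ha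

theorem good_exists (T : MLA) (hbin : T.FullBinary) (h m : ℕ) (hm : m ≤ T.n + 1) :
    ∃ V, T.Good h m V := by
  induction m with
  | zero => exact ⟨fun _ => h, rfl, fun i hi => by omega, fun j _ hj => by omega⟩
  | succ m ih =>
    obtain ⟨V, hV⟩ := ih (by omega)
    exact T.good_step hbin (by omega) hV

end MLA

/-- For every full-binary-tree instance and every `h`, there
exists an allocation of `h` seats fulfilling both upper and lower quota. -/
theorem exists_alloc_within_both_quotas_full_binary (T : MLA) (hbin : T.FullBinary)
    (h : ℕ) :
    ∃ V : Fin (T.n + 1) → ℕ,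
      T.IsAlloc h V ∧ T.FulfillsUpperQuota V ∧ T.FulfillsLowerQuota V := by
  obtain ⟨V, hV⟩ := T.good_exists hbin h (T.n + 1) le_rfl
  refine ⟨V, ⟨hV.1, fun i => hV.2.1 i i.isLt⟩, fun i a ha => ?_, fun i a ha => ?_⟩
  · have hq := abs_lt.1 (T.good_quota hV i i.isLt.le a ha)
    have h1 := Int.le_ceil (T.R i / T.R a * (V a : ℝ))
    have : ((V i : ℤ) : ℝ) < (⌈T.R i / T.R a * (V a : ℝ)⌉ + 1 : ℤ) := by
      push_cast; linarith
    exact Int.lt_add_one_iff.1 (by exact_mod_cast this)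
  · have hq := abs_lt.1 (T.good_quota hV i i.isLt.le a ha)
    have h1 := Int.floor_le (T.R i / T.R a * (V a : ℝ))
    have : ((⌊T.R i / T.R a * (V a : ℝ)⌋ : ℤ) : ℝ) < ((V i : ℤ) + 1 : ℤ) := by
      push_cast; linarith
    exact Int.lt_add_one_iff.1 (by exact_mod_cast this)
end

section
/- Let V be an allocation of h seats on a multi-level apportionment instance, let i be a non-leaf node, and suppose that V_i / R_i < min_{a ∈ A(i)} (V_a + 1)/R_a. Then there exists a child c of i such that V_c / R_c < min_{a ∈ A(i) ∪ {i}} (V_a + 1)/R_a. Consequently, the upper-compliant multi-level quota method is well-defined: in any run, whenever a non-leaf node receives a seat, at least one of its children is eligible to receive the seat. -/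
theorem MLA.ancestors_le (T : MLA) : ∀ (m : ℕ) (i : Fin (T.n + 1)), (i : ℕ) ≤ m →
    ∀ a ∈ T.ancestors i, (a : ℕ) ≤ (i : ℕ) := by
  intro m
  induction m with
  | zero =>
    intro i him a ha
    have h0 : i = 0 := Fin.ext (by simpa using him)
    rw [MLA.ancestors, dif_pos h0, Finset.mem_singleton] at ha
    simp [ha]
  | succ m ih =>
    intro i him a ha
    by_cases h0 : i = 0
    · rw [MLA.ancestors, dif_pos h0, Finset.mem_singleton] at ha
      simp [ha]
    · rw [MLA.ancestors, dif_neg h0, Finset.mem_insert] at ha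
      have hp := T.parent_lt i h0
      rcases ha with rfl | ha
      · exact hp.le
      · exact (ih (T.parent i) (by omega) a ha).trans hp.le

theorem MLA.R_pos_s14 (T : MLA) (i : Fin (T.n + 1)) : 0 < T.R i :=
  Finset.prod_pos (fun a _ => T.W_pos a)

theorem MLA.ancestors_child (T : MLA) {i c : Fin (T.n + 1)} (hc : c ∈ T.children i) :
    T.ancestors c = insert i (T.ancestors i) := by
  obtain ⟨h0, hp⟩ := (Finset.mem_filter.mp hc).2
  rw [MLA.ancestors, dif_neg h0, hp]

theorem MLA.R_child_s14 (T : MLA) {i c : Fin (T.n + 1)} (hc : c ∈ T.children i) :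
    T.R c = T.W c * T.R i := by
  obtain ⟨h0, hp⟩ := (Finset.mem_filter.mp hc).2
  have hlt := T.parent_lt c h0
  rw [hp] at hlt
  have hnot : c ∉ insert i (T.ancestors i) := by
    rw [Finset.mem_insert]
    rintro (h | h)
    · rw [h] at hlt
      exact lt_irrefl _ hlt
    · have := T.ancestors_le i i le_rfl c h
      omega
  unfold MLA.R
  rw [T.ancestors_child hc, Finset.prod_insert hnot]

/-- If `V` is an allocation of `h` seats, `i` is a non-leaf
node, and `V_i / R_i < (V_a + 1)/R_a` for every ancestor `a` of `i`, then some
child `c` of `i` satisfies `V_c / R_c < (V_a + 1)/R_a` for every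
`a ∈ A(i) ∪ {i}`; that is (since `A(c) = A(i) ∪ {i}`), some child of `i` is
eligible in the upper-compliant multi-level quota method, so that method is
well-defined. -/
theorem uc_quota_method_well_defined (T : MLA) (h : ℕ) (V : Fin (T.n + 1) → ℕ)
    (hV : T.IsAlloc h V) (i : Fin (T.n + 1)) (hi : (T.children i).Nonempty)
    (hyp : ∀ a ∈ T.ancestors i, (V i : ℝ) / T.R i < ((V a : ℝ) + 1) / T.R a) :
    ∃ c ∈ T.children i,
      (∀ a ∈ insert i (T.ancestors i), (V c : ℝ) / T.R c < ((V a : ℝ) + 1) / T.R a) ∧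
      T.ucElig V c := by
  have hex : ∃ c ∈ T.children i, (V c : ℝ) ≤ T.W c * (V i : ℝ) := by
    by_contra! hcon
    have hlt := Finset.sum_lt_sum_of_nonempty hi hcon
    have hW : ∑ c ∈ T.children i, T.W c = 1 := T.W_sum i hi
    rw [← Finset.sum_mul, hW, one_mul, hV.2 i hi, Nat.cast_sum] at hlt
    exact lt_irrefl _ hlt
  obtain ⟨c, hc, hle⟩ := hex
  have hR := T.R_pos_s14 i
  have key : (V c : ℝ) / T.R c ≤ (V i : ℝ) / T.R i := by
    rw [T.R_child_s14 hc, ← div_div]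
    apply div_le_div_of_nonneg_right _ hR.le
    rw [div_le_iff₀ (T.W_pos c)]
    linarith
  have main : ∀ a ∈ insert i (T.ancestors i),
      (V c : ℝ) / T.R c < ((V a : ℝ) + 1) / T.R a := by
    intro a ha
    refine key.trans_lt ?_
    rcases Finset.mem_insert.mp ha with rfl | ha
    · exact div_lt_div_of_pos_right (lt_add_one _) hR
    · exact hyp a ha
  refine ⟨c, hc, main, ?_⟩
  unfold MLA.ucElig
  rw [T.ancestors_child hc]
  exact main
end
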